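/- arXiv:1707.02646 — 2 statements merged into one kernel-verified Lean document; each statement's English description precedes it below -/
import Mathlib

section
/- Fix an integer m ≥ 1 and vectors u₁, …, u_s ∈ ℤⁿ that span ℝⁿ over ℝ, and let S be the submonoid of ℤⁿ generated by u₁, …, u_s. Then there exists a positive integer c₀ such that for every a ∈ ℤⁿ with ⟨a, u⟩ ≥ 0 for all u ∈ S, there exists b ∈ ℤⁿ with ⟨b, u⟩ ≥ 0 for all u ∈ S satisfying: (i) the set {uᵢ : ⟨b, uᵢ⟩ ≤ m + c₀} spans ℝⁿ over ℝ; and (ii) for every u ∈ S, ⟨a, u⟩ ≤ m if and only if ⟨b, u⟩ ≤ m, and ⟨a, u⟩ = ⟨b, u⟩ whenever ⟨a, u⟩ ≤ m. -/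
theorem stmt3 (m n s : ℕ) (hm : 1 ≤ m) (u : Fin s → Fin n → ℤ)
    (hspan : Submodule.span ℝ (Set.range fun i => fun j => (u i j : ℝ)) = ⊤) :
    ∃ c₀ : ℕ, 0 < c₀ ∧
      ∀ a : Fin n → ℤ,
        (∀ w ∈ AddSubmonoid.closure (Set.range u), 0 ≤ ∑ j, a j * w j) →
        ∃ b : Fin n → ℤ,
          (∀ w ∈ AddSubmonoid.closure (Set.range u), 0 ≤ ∑ j, b j * w j) ∧
          Submodule.span ℝ
            {x : Fin n → ℝ | ∃ i, (∑ j, b j * u i j) ≤ (m : ℤ) + (c₀ : ℤ) ∧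
              x = fun j => (u i j : ℝ)} = ⊤ ∧
          ∀ w ∈ AddSubmonoid.closure (Set.range u),
            ((∑ j, a j * w j) ≤ (m : ℤ) ↔ (∑ j, b j * w j) ≤ (m : ℤ)) ∧
            ((∑ j, a j * w j) ≤ (m : ℤ) → (∑ j, a j * w j) = ∑ j, b j * w j) := by
  
  classical
  let f : (Fin n → ℤ) → (Fin s → Fin (m + 2)) := fun a i =>
    ⟨min (∑ j, a j * u i j).toNat (m + 1), by omega⟩
  let P : (Fin n → ℤ) → Prop := fun a =>
    ∀ w ∈ AddSubmonoid.closure (Set.range u), 0 ≤ ∑ j, a j * w j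
  have hB : ∀ p : Fin s → Fin (m + 2), ∃ b : Fin n → ℤ,
      (∃ a, P a ∧ f a = p) → (P b ∧ f b = p) := by
    intro p
    by_cases h : ∃ a, P a ∧ f a = p
    · obtain ⟨a, ha⟩ := h
      exact ⟨a, fun _ => ha⟩
    · exact ⟨0, fun h' => absurd h' h⟩
  choose B hB using hB
  refine ⟨1 + ∑ p, ∑ i, (∑ j, B p j * u i j).natAbs, by omega, ?_⟩
  intro a ha
  obtain ⟨hb, hf⟩ := hB (f a) ⟨a, ha, rfl⟩
  refine ⟨B (f a), hb, ?_, ?_⟩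
  · rw [← hspan]
    congr 1
    ext x
    constructor
    · rintro ⟨i, -, rfl⟩
      exact ⟨i, rfl⟩
    · rintro ⟨i, rfl⟩
      refine ⟨i, ?_, rfl⟩
      have h1 : (∑ j, B (f a) j * u i j).natAbs ≤ ∑ i, (∑ j, B (f a) j * u i j).natAbs :=
        Finset.single_le_sum (f := fun i => (∑ j, B (f a) j * u i j).natAbs)
          (fun _ _ => Nat.zero_le _) (Finset.mem_univ i)
      have h2 : ∑ i, (∑ j, B (f a) j * u i j).natAbs
          ≤ ∑ p, ∑ i, (∑ j, B p j * u i j).natAbs :=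
        Finset.single_le_sum (f := fun p => ∑ i, (∑ j, B p j * u i j).natAbs)
          (fun _ _ => Nat.zero_le _) (Finset.mem_univ (f a))
      omega
  · generalize B (f a) = b at hb hf
    have key : ∀ w ∈ AddSubmonoid.closure (Set.range u),
        min (∑ j, a j * w j) (m + 1 : ℤ) = min (∑ j, b j * w j) (m + 1 : ℤ) := by
      intro w hw
      induction hw using AddSubmonoid.closure_induction with
      | mem x hx =>
        obtain ⟨i, rfl⟩ := hx
        have h1 := ha _ (AddSubmonoid.subset_closure ⟨i, rfl⟩)
        have h2 := hb _ (AddSubmonoid.subset_closure ⟨i, rfl⟩)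
        have h3 := congrArg Fin.val (congrFun hf i)
        simp only [f] at h3
        omega
      | zero => simp
      | add x y hx hy ihx ihy =>
        have h1 := ha _ hx
        have h2 := ha _ hy
        have h3 := hb _ hx
        have h4 := hb _ hy
        simp only [Pi.add_apply, mul_add, Finset.sum_add_distrib]
        omega
    intro w hw
    have h := key w hw
    omega
end

section
/- Fix an integer n ≥ 0 and pairwise distinct exponent vectors I¹, …, I^N ∈ ℕ^{n+1} with N ≥ 1. Then there exists a nonzero polynomial g ∈ ℂ[a₁, …, a_N] such that for every tuple (a₁, …, a_N) ∈ ℂ^N with aᵢ ≠ 0 for all i and g(a₁, …, a_N) ≠ 0, the polynomial P = Σ_{i=1}^{N} aᵢ x^{Iⁱ} ∈ ℂ[x₁, …, x_{n+1}] has no common zero with all of its partial derivatives in the algebraic torus: there is no point z ∈ ℂ^{n+1} with zⱼ ≠ 0 for all j, P(z) = 0, and (∂P/∂xⱼ)(z) = 0 for all j = 1, …, n+1. -/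
theorem aux_lattice (r N : ℕ) (v : Fin N → Fin r → ℤ) :
    ∃ (s : ℕ) (m : Fin s → Fin r → ℤ) (c : Fin N → Fin s → ℤ) (P : Fin s → Fin r → ℚ)
      (q : Fin s → Fin N → ℤ),
      (∀ i j, v i j = ∑ k, c i k * m k j) ∧
      (∀ i k, (c i k : ℚ) = ∑ j, P k j * (v i j : ℚ)) ∧
      (∀ k k', ∑ i, q k i * c i k' = if k = k' then 1 else 0) := by
  classical
  let M : Submodule ℤ (Fin r → ℤ) := Submodule.span ℤ (Set.range v)
  obtain ⟨s, b⟩ := Submodule.basisOfPid (Pi.basisFun ℤ (Fin r)) M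
  have hv : ∀ i, v i ∈ M := fun i => Submodule.subset_span ⟨i, rfl⟩
  let c : Fin N → Fin s → ℤ := fun i k => b.repr ⟨v i, hv i⟩ k
  let m : Fin s → Fin r → ℤ := fun k => (b k : Fin r → ℤ)
  have h1 : ∀ i j, v i j = ∑ k, c i k * m k j := by
    intro i j
    have h := b.sum_repr ⟨v i, hv i⟩
    have h' := congrArg (fun x : M => (x : Fin r → ℤ) j) h
    simp only [Submodule.coe_sum, Submodule.coe_smul, Finset.sum_apply, Pi.smul_apply,
      smul_eq_mul] at h'
    exact h'.symm
  have hq : ∀ k, ∃ q : Fin N → ℤ, ∑ i, q i • v i = m k := fun k =>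
    (Submodule.mem_span_range_iff_exists_fun ℤ).1 (b k).2
  choose q hq using hq
  have hmZ : LinearIndependent ℤ m := b.linearIndependent.map' M.subtype M.ker_subtype
  let mQ : Fin s → Fin r → ℚ := fun k j => (m k j : ℚ)
  have hmQ : LinearIndependent ℚ mQ := by
    rw [← LinearIndependent.iff_fractionRing (R := ℤ)]
    rw [Fintype.linearIndependent_iff] at hmZ ⊢
    intro g hg
    apply hmZ g
    ext j
    have := congrFun hg j
    simp [mQ, Finset.sum_apply] at this ⊢
    exact_mod_cast this
  obtain ⟨G, hG⟩ := LinearMap.exists_leftInverse_of_injective (Fintype.linearCombination ℚ mQ)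
    (by
      rw [LinearMap.ker_eq_bot]
      exact hmQ.fintypeLinearCombination_injective)
  refine ⟨s, m, c, fun k j => G (Pi.single j 1) k, q, h1, ?_, ?_⟩
  · intro i k
    have h2 := LinearMap.congr_fun hG (fun k => (c i k : ℚ))
    have h3 : Fintype.linearCombination ℚ mQ (fun k => (c i k : ℚ)) = fun j => (v i j : ℚ) := by
      ext j
      simp [Fintype.linearCombination_apply, Finset.sum_apply, h1, mQ]
    rw [LinearMap.comp_apply, h3, LinearMap.pi_apply_eq_sum_univ] at h2
    have h4 := congrFun h2 k
    simp only [Finset.sum_apply, Pi.smul_apply, smul_eq_mul, LinearMap.id_apply] at h4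
    rw [← h4]
    refine Finset.sum_congr rfl fun j _ => ?_
    rw [mul_comm]
    congr 1
    refine congrFun (congrArg G ?_) k
    ext x
    simp [Pi.single_apply, eq_comm]
  · intro k k'
    have h2 : ∑ i, q k i • (⟨v i, hv i⟩ : M) = b k := by
      apply Subtype.ext
      simpa using hq k
    have h3 := congrArg (fun x => b.repr x k') h2
    simp only [map_sum, map_smul, Finsupp.coe_finset_sum, Finset.sum_apply, Finsupp.smul_apply,
      smul_eq_mul, Module.Basis.repr_self, Finsupp.single_apply] at h3
    exact h3

theorem aux_rel (N : ℕ) {σ : Type} [Fintype σ] (h : Fintype.card σ < N)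
    (F : Fin N → MvPolynomial σ ℂ) :
    ∃ g : MvPolynomial (Fin N) ℂ, g ≠ 0 ∧ MvPolynomial.aeval F g = 0 := by
  by_contra hc
  push Not at hc
  have hF : AlgebraicIndependent ℂ F := by
    rw [algebraicIndependent_iff]
    intro p hp
    by_contra h0
    exact hc p h0 hp
  have := hF.cardinalMk_le_trdeg
  rw [MvPolynomial.trdeg_of_isDomain] at this
  simp at this
  omega

theorem aux_ker (N s : ℕ) (i0 : Fin N) (c : Fin N → Fin s → ℤ) (q : Fin s → Fin N → ℤ)
    (h0 : ∀ k, c i0 k = 0)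
    (hq : ∀ k k', ∑ i, q k i * c i k' = if k = k' then 1 else 0) :
    ∃ (d : ℕ) (β : Fin d → Fin N → ℂ), d + s < N ∧
      ∀ b : Fin N → ℂ, ∑ i, b i = 0 → (∀ k, ∑ i, b i * c i k = 0) →
        ∃ t : Fin d → ℂ, ∀ i, b i = ∑ l, t l * β l i := by
  classical
  let ψ : (Fin N → ℂ) →ₗ[ℂ] (ℂ × (Fin s → ℂ)) :=
    { toFun := fun b => (∑ i, b i, fun k => ∑ i, b i * c i k)
      map_add' := by
        intro x y
        ext <;> simp [add_mul, Finset.sum_add_distrib]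
      map_smul' := by
        intro x y
        ext <;> simp [Finset.mul_sum, mul_assoc] }
  have hψ : Function.Surjective ψ := by
    rintro ⟨x, y⟩
    let u : Fin N → ℂ := fun i => ∑ k, y k * q k i
    refine ⟨fun i => u i + (if i = i0 then x - ∑ i', u i' else 0), ?_⟩
    refine Prod.ext ?_ ?_
    · simp [ψ, Finset.sum_add_distrib]
    · funext k
      simp only [ψ, LinearMap.coe_mk, AddHom.coe_mk, add_mul, Finset.sum_add_distrib, ite_mul,
        zero_mul, Finset.sum_ite_eq', Finset.mem_univ, if_true, h0, Int.cast_zero, mul_zero,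
        add_zero, u, Finset.sum_mul]
      rw [Finset.sum_comm]
      have : ∀ k', ∑ i, y k' * (q k' i : ℂ) * (c i k : ℂ) = y k' * (if k' = k then 1 else 0) := by
        intro k'
        have h := congrArg (fun z : ℤ => (z : ℂ)) (hq k' k)
        push_cast at h
        rw [← h, Finset.mul_sum]
        exact Finset.sum_congr rfl fun i _ => by ring
      simp [this]
  have hr := LinearMap.finrank_range_add_finrank_ker ψ
  rw [LinearMap.range_eq_top.2 hψ, finrank_top] at hr
  simp at hr
  let B := Module.finBasis ℂ (LinearMap.ker ψ)
  refine ⟨Module.finrank ℂ (LinearMap.ker ψ), fun l => (B l : Fin N → ℂ), by omega, ?_⟩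
  intro b hb hb'
  have hbk : b ∈ LinearMap.ker ψ := by
    rw [LinearMap.mem_ker]
    refine Prod.ext ?_ ?_
    · simpa [ψ] using hb
    · funext k
      simpa [ψ] using hb' k
  refine ⟨fun l => B.repr ⟨b, hbk⟩ l, fun i => ?_⟩
  have h := B.sum_repr ⟨b, hbk⟩
  have h' := congrArg (fun x : LinearMap.ker ψ => (x : Fin N → ℂ) i) h
  simp only [Submodule.coe_sum, Submodule.coe_smul, Finset.sum_apply, Pi.smul_apply,
    smul_eq_mul] at h'
  exact h'.symm

theorem aux_pderiv (n N : ℕ) (I : Fin N → Fin (n + 1) → ℕ) (a : Fin N → ℂ)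
    (z : Fin (n + 1) → ℂ) (j : Fin (n + 1)) :
    z j * MvPolynomial.eval z (MvPolynomial.pderiv j
              (∑ i, MvPolynomial.C (a i) * ∏ j', MvPolynomial.X j' ^ I i j'))
      = ∑ i, (a i * ∏ j', z j' ^ I i j') * (I i j : ℂ) := by
  classical
  have hmon : ∀ i, MvPolynomial.C (a i) * ∏ j', (MvPolynomial.X j' : MvPolynomial _ ℂ) ^ I i j'
      = MvPolynomial.monomial (Finsupp.equivFunOnFinite.symm (I i)) (a i) := by
    intro i
    rw [MvPolynomial.monomial_eq, Finsupp.prod_fintype _ _ (by simp)]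
    simp
  simp only [hmon, map_sum, MvPolynomial.pderiv_monomial, Finset.mul_sum]
  refine Finset.sum_congr rfl fun i _ => ?_
  rw [MvPolynomial.eval_monomial, Finsupp.prod_fintype _ _ (by simp)]
  simp only [Finsupp.coe_tsub, Pi.sub_apply, Finsupp.equivFunOnFinite_symm_apply_apply]
  rcases Nat.eq_zero_or_pos (I i j) with h | h
  · simp [h]
  · rw [← Finset.mul_prod_erase _ _ (Finset.mem_univ j),
      ← Finset.mul_prod_erase (a := j) (f := fun j' => z j' ^ I i j') _ (Finset.mem_univ j)]
    have he : ∏ x ∈ Finset.univ.erase j, z x ^ (I i x - (Finsupp.single j 1) x)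
        = ∏ x ∈ Finset.univ.erase j, z x ^ (I i x) := by
      refine Finset.prod_congr rfl fun x hx => ?_
      rw [Finsupp.single_eq_of_ne (Finset.ne_of_mem_erase hx)]
      simp
    rw [he]
    obtain ⟨e, he'⟩ : ∃ e, I i j = e + 1 := ⟨I i j - 1, by omega⟩
    simp only [he', Finsupp.single_eq_same, Nat.add_sub_cancel, pow_succ]
    ring

theorem aux_eval {N : ℕ} {σ : Type} (F : Fin N → MvPolynomial σ ℂ) (pt : σ → ℂ)
    (g : MvPolynomial (Fin N) ℂ) :
    MvPolynomial.eval (fun i => MvPolynomial.eval pt (F i)) g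
      = MvPolynomial.eval pt (MvPolynomial.aeval F g) := by
  induction g using MvPolynomial.induction_on with
  | C x => simp
  | add p q hp hq => simp [hp, hq]
  | mul_X p i hp => simp [hp]

theorem stmt11 (n N : ℕ) (hN : 1 ≤ N) (I : Fin N → Fin (n + 1) → ℕ)
    (hI : Function.Injective I) :
    ∃ g : MvPolynomial (Fin N) ℂ, g ≠ 0 ∧
      ∀ a : Fin N → ℂ, (∀ i, a i ≠ 0) → MvPolynomial.eval a g ≠ 0 →
        ¬ ∃ z : Fin (n + 1) → ℂ, (∀ j, z j ≠ 0) ∧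
          MvPolynomial.eval z
            (∑ i, MvPolynomial.C (a i) * ∏ j, MvPolynomial.X j ^ I i j) = 0 ∧
          ∀ j, MvPolynomial.eval z
            (MvPolynomial.pderiv j
              (∑ i, MvPolynomial.C (a i) * ∏ j', MvPolynomial.X j' ^ I i j')) = 0 := by
  classical
  let i0 : Fin N := ⟨0, hN⟩
  let v : Fin N → Fin (n + 1) → ℤ := fun i j => (I i j : ℤ) - I i0 j
  obtain ⟨s, m, c, P, q, h1, h2, h3⟩ := aux_lattice (n + 1) N v
  have hc0 : ∀ k, c i0 k = 0 := by
    intro k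
    have h := h2 i0 k
    simp [v] at h
    exact h
  obtain ⟨d, β, hd, hβ⟩ := aux_ker N s i0 c q hc0 h3
  let M : ℤ := ∑ i, ∑ k, |c i k|
  have hM : ∀ i k, 0 ≤ M - c i k := by
    intro i k
    have e1 : |c i k| ≤ ∑ k, |c i k| :=
      Finset.single_le_sum (f := fun k => |c i k|) (fun _ _ => abs_nonneg _) (Finset.mem_univ k)
    have e2 : ∑ k, |c i k| ≤ M :=
      Finset.single_le_sum (f := fun i => ∑ k, |c i k|)
        (fun _ _ => Finset.sum_nonneg fun _ _ => abs_nonneg _) (Finset.mem_univ i)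
    have := le_abs_self (c i k)
    omega
  let F : Fin N → MvPolynomial (Fin d ⊕ Fin s) ℂ := fun i =>
    (∑ l, MvPolynomial.X (Sum.inl l) * MvPolynomial.C (β l i)) *
      ∏ k, MvPolynomial.X (Sum.inr k) ^ (M - c i k).toNat
  obtain ⟨g, hg0, hg⟩ := aux_rel N (by simpa using hd) F
  refine ⟨g, hg0, ?_⟩
  rintro a - hga ⟨z, hz, hP, hdP⟩
  apply hga
  let b : Fin N → ℂ := fun i => a i * ∏ j, z j ^ I i j
  have hb0 : ∑ i, b i = 0 := by
    simpa [b, map_prod] using hP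
  have hbI : ∀ j, ∑ i, b i * (I i j : ℂ) = 0 := by
    intro j
    have := aux_pderiv n N I a z j
    rw [hdP j, mul_zero] at this
    exact this.symm
  have hbv : ∀ j, ∑ i, b i * (v i j : ℂ) = 0 := by
    intro j
    simp only [v, Int.cast_sub, Int.cast_natCast, mul_sub, Finset.sum_sub_distrib, hbI,
      ← Finset.sum_mul, hb0]
    simp
  have hbc : ∀ k, ∑ i, b i * (c i k : ℂ) = 0 := by
    intro k
    have hcc : ∀ i, (c i k : ℂ) = ∑ j, (P k j : ℂ) * (v i j : ℂ) := by
      intro i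
      have h := congrArg (fun x : ℚ => (x : ℂ)) (h2 i k)
      push_cast at h
      exact h
    simp only [hcc, Finset.mul_sum]
    rw [Finset.sum_comm]
    refine Finset.sum_eq_zero fun j _ => ?_
    rw [← mul_zero (P k j : ℂ), ← hbv j, Finset.mul_sum]
    exact Finset.sum_congr rfl fun i _ => by ring
  let w : Fin s → ℂ := fun k => ∏ j, z j ^ m k j
  have hw : ∀ k, w k ≠ 0 := fun k => Finset.prod_ne_zero_iff.2 fun j _ => zpow_ne_zero _ (hz j)
  let z0 : ℂ := ∏ j, z j ^ I i0 j
  have hz0 : z0 ≠ 0 := Finset.prod_ne_zero_iff.2 fun j _ => pow_ne_zero _ (hz j)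
  let lam : ℂ := z0⁻¹ * ∏ k, w k ^ (-M)
  have hzI : ∀ i, ∏ j, z j ^ I i j = z0 * ∏ k, w k ^ (c i k) := by
    intro i
    have e1 : ∏ k, w k ^ (c i k) = ∏ j, z j ^ v i j := by
      simp only [w, ← Finset.prod_zpow]
      rw [Finset.prod_comm]
      refine Finset.prod_congr rfl fun j _ => ?_
      rw [h1]
      have : ∀ S : Finset (Fin s), z j ^ (∑ k ∈ S, c i k * m k j)
          = ∏ k ∈ S, (z j ^ m k j) ^ c i k := by
        intro S
        induction S using Finset.induction_on with
        | empty => simp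
        | insert x S hx ih =>
          rw [Finset.sum_insert hx, Finset.prod_insert hx, zpow_add₀ (hz j), ih, ← zpow_mul,
            mul_comm (c i x)]
      exact (this _).symm
    rw [e1, ← Finset.prod_mul_distrib]
    refine Finset.prod_congr rfl fun j _ => ?_
    rw [← zpow_natCast (z j) (I i0 j), ← zpow_add₀ (hz j), ← zpow_natCast]
    congr 1
    simp [v]
  obtain ⟨t, ht⟩ := hβ (fun i => lam * b i) (by rw [← Finset.mul_sum, hb0, mul_zero])
    (fun k => by simp only [mul_assoc]; rw [← Finset.mul_sum, hbc, mul_zero])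
  let pt : Fin d ⊕ Fin s → ℂ := Sum.elim t w
  have hF : ∀ i, MvPolynomial.eval pt (F i) = a i := by
    intro i
    have e1 : MvPolynomial.eval pt (F i) = (lam * b i) * ∏ k, w k ^ (M - c i k).toNat := by
      rw [ht i]
      simp [F, pt, map_prod]
    have e2 : ∏ k, w k ^ (M - c i k).toNat = ∏ k, w k ^ (M - c i k) := by
      refine Finset.prod_congr rfl fun k _ => ?_
      rw [← zpow_natCast, Int.toNat_of_nonneg (hM i k)]
    have e3 : (∏ k, w k ^ (-M)) * (∏ k, w k ^ (c i k)) * ∏ k, w k ^ (M - c i k) = 1 := by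
      rw [← Finset.prod_mul_distrib, ← Finset.prod_mul_distrib]
      refine Finset.prod_eq_one fun k _ => ?_
      rw [← zpow_add₀ (hw k), ← zpow_add₀ (hw k)]
      simp
    rw [e1, e2]
    simp only [b, lam, hzI]
    calc _ = a i * (z0⁻¹ * z0) * ((∏ k, w k ^ (-M)) * (∏ k, w k ^ (c i k)) *
          ∏ k, w k ^ (M - c i k)) := by ring
      _ = a i := by rw [e3, inv_mul_cancel₀ hz0]; ring
  have hfin := congrArg (MvPolynomial.eval pt) hg
  rw [map_zero] at hfin
  rw [← hfin]
  have : a = fun i => MvPolynomial.eval pt (F i) := funext fun i => (hF i).symm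
  rw [this]
  exact aux_eval F pt g
end
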